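/- With the notation of the context, the odd Fourier transform F_odd : ⋀Θ → ⋀T exchanges odd derivatives with exterior multiplication and exterior multiplication with odd derivatives: for every a ∈ {1,2} and every x ∈ ⋀Θ, (i) F_odd(∂_{θ^a} x) = i Σ_b ε_{ab} τ^b ∧ F_odd(x); (ii) F_odd(∂_{θ̄^a} x) = i Σ_b ε_{ab} τ̄^b ∧ F_odd(x); (iii) F_odd(θ^a ∧ x) = −i Σ_b ε^{ab} ∂_{τ^b}(F_odd(x)); (iv) F_odd(θ̄^a ∧ x) = −i Σ_b ε^{ab} ∂_{τ̄^b}(F_odd(x)). -/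

import Mathlib

noncomputable section

/-- Coordinates of the exterior algebra `⋀(ℂ⁸)` with distinguished basis
`τ¹, τ², τ̄¹, τ̄², θ¹, θ², θ̄¹, θ̄²` (indexed `0,…,7`): an element is given by its
coefficients on the basis monomials `e_S` (`S ⊆ {0,…,7}`, factors in increasing index
order). Elements supported on subsets of `{0,1,2,3}` form `⋀T`, and elements supported
on subsets of `{4,5,6,7}` form `⋀Θ`. -/
abbrev Lam8 : Type := Finset (Fin 8) → ℂ

/-- The basis monomial `e_S` of `⋀(ℂ⁸)`. -/
def E8 (S : Finset (Fin 8)) : Lam8 := fun T => if T = S then 1 else 0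

/-- The Koszul sign `(−1)^{#{(a,b) ∈ A×B : b < a}}` with `e_A ∧ e_B = ± e_{A∪B}`. -/
def kz (A B : Finset (Fin 8)) : ℂ := (-1 : ℂ) ^ (∑ a ∈ A, (B.filter (· < a)).card)

/-- The wedge product of `⋀(ℂ⁸)`, in coordinates. -/
def wedge (f g : Lam8) : Lam8 := fun S =>
  ∑ A ∈ S.powerset, kz A (S \ A) * f A * g (S \ A)

/-- The Berezin integral `⋀(ℂ⁸) → ⋀T`: the coefficient of the top monomial
`θ¹∧θ²∧θ̄¹∧θ̄²` in the decomposition `Σ_I α_I ∧ θ_I`, `α_I ∈ ⋀T`. -/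
def Ber (f : Lam8) : Lam8 := fun S =>
  if S ⊆ ({0, 1, 2, 3} : Finset (Fin 8)) then f (S ∪ ({4, 5, 6, 7} : Finset (Fin 8))) else 0

/-- The factor `1 − i·τ¹∧θ² + i·τ²∧θ¹ + τ¹∧τ²∧θ¹∧θ²` of the Fourier kernel. -/
def Kplus : Lam8 :=
  E8 ∅ - Complex.I • E8 {0, 5} + Complex.I • E8 {1, 4} + E8 {0, 1, 4, 5}

/-- The factor `1 − i·τ̄¹∧θ̄² + i·τ̄²∧θ̄¹ + τ̄¹∧τ̄²∧θ̄¹∧θ̄²` of the Fourier kernel. -/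
def Kminus : Lam8 :=
  E8 ∅ - Complex.I • E8 {2, 7} + Complex.I • E8 {3, 6} + E8 {2, 3, 6, 7}

/-- The Fourier kernel `K`, the expansion of `exp(−i(ε₊(τ,θ) + ε₋(τ̄,θ̄)))`. -/
def Kker : Lam8 := wedge Kplus Kminus

/-- The odd Fourier transform `F_odd(a) = Ber(K ∧ a)`. -/
def Fodd (a : Lam8) : Lam8 := Ber (wedge Kker a)

/-- Index of `τ^a`. -/
def tI (a : Fin 2) : Fin 8 := ⟨a.val, by have := a.isLt; omega⟩
/-- Index of `τ̄^a`. -/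
def tbI (a : Fin 2) : Fin 8 := ⟨a.val + 2, by have := a.isLt; omega⟩
/-- Index of `θ^a`. -/
def thI (a : Fin 2) : Fin 8 := ⟨a.val + 4, by have := a.isLt; omega⟩
/-- Index of `θ̄^a`. -/
def thbI (a : Fin 2) : Fin 8 := ⟨a.val + 6, by have := a.isLt; omega⟩

/-- The odd derivation `∂_i` of the exterior algebra dual to the `i`-th basis vector
(`∂_i(e_j) = δ_{ij}`, graded Leibniz rule), in coordinates. -/
def dOp8 (i : Fin 8) (a : Lam8) : Lam8 := fun S =>
  if i ∈ S then 0 else (-1 : ℂ) ^ (S.filter (· < i)).card * a (insert i S)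

/-- The antisymmetric symbol `ε` with `ε₁₂ = −ε₂₁ = 1` (`0`-indexed). -/
def eps (a b : Fin 2) : ℂ :=
  if a = 0 ∧ b = 1 then 1 else if a = 1 ∧ b = 0 then -1 else 0

/-- `x ∈ ⋀Θ`: `x` is supported on the `θ`-indices `{4,5,6,7}`. -/
def inLamTheta (x : Lam8) : Prop :=
  ∀ S : Finset (Fin 8), x S ≠ 0 → S ⊆ ({4, 5, 6, 7} : Finset (Fin 8))

/-!
The kernel `K` is an even element, the exponential of a quadratic form pairing `τ` with `θ`, so that
`∂ᵢK = vᵢ ∧ K`, where `vᵢ` is the derivative of the exponent: it is linear in `τ` when `i` is a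
`θ`-direction, and linear in `θ` when `i` is a `τ`-direction. Applying the graded Leibniz rule to
`∂ᵢ(K ∧ x)` gives `K ∧ ∂ᵢx = ∂ᵢ(K ∧ x) - vᵢ ∧ K ∧ x`. For a `θ`-direction the Berezin integral kills
the first term on the right, and being `⋀T`-linear it lets `vᵢ` out of the second. For a
`τ`-direction the Berezin integral commutes with `∂ᵢ`, while `∂ᵢx = 0` because `x ∈ ⋀Θ`, so that
`∂ᵢ F(x) = F(vᵢ ∧ x)`; the antisymmetric symbol then inverts the relation between the `vᵢ` and `θ`.
-/

section Linearity

variable {ι : Type*} [Fintype ι]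

lemma wedge_add_left (f₁ f₂ g : Lam8) : wedge (f₁ + f₂) g = wedge f₁ g + wedge f₂ g := by
  ext S
  simp only [wedge, Pi.add_apply, mul_add, add_mul, Finset.sum_add_distrib]

lemma wedge_add_right (f g₁ g₂ : Lam8) : wedge f (g₁ + g₂) = wedge f g₁ + wedge f g₂ := by
  ext S
  simp only [wedge, Pi.add_apply, mul_add, Finset.sum_add_distrib]

lemma wedge_smul_left (c : ℂ) (f g : Lam8) : wedge (c • f) g = c • wedge f g := by
  ext S
  simp only [wedge, Pi.smul_apply, smul_eq_mul, Finset.mul_sum, mul_assoc, mul_left_comm]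

lemma wedge_smul_right (c : ℂ) (f g : Lam8) : wedge f (c • g) = c • wedge f g := by
  ext S
  simp only [wedge, Pi.smul_apply, smul_eq_mul, Finset.mul_sum, mul_left_comm]

/-- The wedge product as a bilinear map. -/
def wedgeBilin : Lam8 →ₗ[ℂ] Lam8 →ₗ[ℂ] Lam8 :=
  LinearMap.mk₂ ℂ wedge wedge_add_left wedge_smul_left wedge_add_right wedge_smul_right

lemma zero_wedge (g : Lam8) : wedge 0 g = 0 := map_zero (wedgeBilin.flip g)

lemma wedge_zero_right (f : Lam8) : wedge f 0 = 0 := map_zero (wedgeBilin f)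

lemma wedge_neg_left (f g : Lam8) : wedge (-f) g = -wedge f g := map_neg (wedgeBilin.flip g) f

lemma wedge_sub_left (f₁ f₂ g : Lam8) : wedge (f₁ - f₂) g = wedge f₁ g - wedge f₂ g :=
  map_sub (wedgeBilin.flip g) f₁ f₂

lemma sum_smul_wedge (c : ι → ℂ) (f : ι → Lam8) (g : Lam8) :
    wedge (∑ b, c b • f b) g = ∑ b, c b • wedge (f b) g :=
  (map_sum (wedgeBilin.flip g) _ _).trans <|
    Finset.sum_congr rfl fun _ _ => map_smul (wedgeBilin.flip g) _ _

lemma wedge_sum_smul (f : Lam8) (c : ι → ℂ) (g : ι → Lam8) :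
    wedge f (∑ b, c b • g b) = ∑ b, c b • wedge f (g b) :=
  (map_sum (wedgeBilin f) _ _).trans <|
    Finset.sum_congr rfl fun _ _ => map_smul (wedgeBilin f) _ _

lemma dOp8_add (i : Fin 8) (f g : Lam8) : dOp8 i (f + g) = dOp8 i f + dOp8 i g := by
  ext S
  simp only [dOp8, Pi.add_apply]
  split_ifs <;> ring

lemma dOp8_smul (i : Fin 8) (c : ℂ) (f : Lam8) : dOp8 i (c • f) = c • dOp8 i f := by
  ext S
  simp only [dOp8, Pi.smul_apply, smul_eq_mul]
  split_ifs <;> ring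

lemma Ber_add (f g : Lam8) : Ber (f + g) = Ber f + Ber g := by
  ext S
  simp only [Ber, Pi.add_apply]
  split_ifs <;> simp only [add_zero]

lemma Ber_sum_smul (c : ι → ℂ) (f : ι → Lam8) :
    Ber (∑ b, c b • f b) = ∑ b, c b • Ber (f b) := by
  ext S
  simp only [Ber, Finset.sum_apply, Pi.smul_apply, smul_eq_mul]
  split_ifs <;> simp only [mul_zero, Finset.sum_const_zero]

end Linearity

lemma kz_eq_prod (A B : Finset (Fin 8)) :
    kz A B = ∏ a ∈ A, ∏ b ∈ B, if b < a then -1 else 1 := by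
  simp only [kz, ← Finset.prod_pow_eq_pow_sum, Finset.prod_ite, Finset.prod_const, one_pow, mul_one]

lemma kz_union_left {A B : Finset (Fin 8)} (h : Disjoint A B) (C : Finset (Fin 8)) :
    kz (A ∪ B) C = kz A C * kz B C := by
  simp only [kz_eq_prod, Finset.prod_union h]

lemma kz_union_right (A : Finset (Fin 8)) {B C : Finset (Fin 8)} (h : Disjoint B C) :
    kz A (B ∪ C) = kz A B * kz A C := by
  simp only [kz_eq_prod, Finset.prod_union h, Finset.prod_mul_distrib]

lemma kz_insert_left {i : Fin 8} {A : Finset (Fin 8)} (h : i ∉ A) (B : Finset (Fin 8)) :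
    kz (insert i A) B = kz {i} B * kz A B := by
  rw [Finset.insert_eq, kz_union_left (Finset.disjoint_singleton_left.2 h)]

lemma kz_insert_right (A : Finset (Fin 8)) {i : Fin 8} {B : Finset (Fin 8)} (h : i ∉ B) :
    kz A (insert i B) = kz A {i} * kz A B := by
  rw [Finset.insert_eq, kz_union_right A (Finset.disjoint_singleton_left.2 h)]

lemma kz_mul_self (A B : Finset (Fin 8)) : kz A B * kz A B = 1 := by
  rw [kz, ← mul_pow, neg_one_mul, neg_neg, one_pow]

lemma kz_mul_kz_swap {A B : Finset (Fin 8)} (h : Disjoint A B) :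
    kz A B * kz B A = (-1) ^ (A.card * B.card) := by
  have hsign : ∀ a ∈ A, ∀ b ∈ B,
      (if b < a then (-1 : ℂ) else 1) * (if a < b then -1 else 1) = -1 := by
    intro a ha b hb
    have hne : a ≠ b := fun hab => Finset.disjoint_left.1 h ha (hab ▸ hb)
    rcases hne.lt_or_gt with hab | hab <;> simp [hab, hab.not_gt]
  rw [kz_eq_prod, kz_eq_prod, Finset.prod_comm (s := B), ← Finset.prod_mul_distrib]
  simp only [← Finset.prod_mul_distrib]
  rw [Finset.prod_congr rfl fun a ha => Finset.prod_congr rfl (hsign a ha)]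
  simp only [Finset.prod_const, ← pow_mul, mul_comm]

lemma kz_singleton_mul_swap {i : Fin 8} {A : Finset (Fin 8)} (h : i ∉ A) :
    kz A {i} * kz {i} A = (-1) ^ A.card := by
  rw [kz_mul_kz_swap (Finset.disjoint_singleton_right.2 h), Finset.card_singleton, mul_one]

lemma kz_eq_one_of_lt {A B : Finset (Fin 8)} (h : ∀ a ∈ A, ∀ b ∈ B, a < b) : kz A B = 1 := by
  rw [kz_eq_prod]
  exact Finset.prod_eq_one fun a ha => Finset.prod_eq_one fun b hb => if_neg (h a ha b hb).not_gt

lemma wedge_assoc (f g h : Lam8) : wedge (wedge f g) h = wedge f (wedge g h) := by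
  ext S
  simp only [wedge, Finset.mul_sum, Finset.sum_mul, Finset.sum_sigma']
  refine Finset.sum_bij' (fun p _ => ⟨p.2, p.1 \ p.2⟩) (fun p _ => ⟨p.1 ∪ p.2, p.1⟩)
    (fun p hp => ?_) (fun p hp => ?_) (fun p hp => ?_) (fun p hp => ?_) (fun p hp => ?_)
  all_goals
    simp only [Finset.mem_sigma, Finset.mem_powerset] at hp
    obtain ⟨h₁, h₂⟩ := hp
  · grind
  · grind
  · simp [Finset.union_sdiff_of_subset h₂]
  · simp [Finset.union_sdiff_cancel_left (Finset.subset_sdiff.1 h₂).2.symm]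
  · have hST : S \ p.2 = p.1 \ p.2 ∪ S \ p.1 := by grind
    have hpS : (S \ p.2) \ (p.1 \ p.2) = S \ p.1 := by grind
    have hsplit : kz p.1 (S \ p.1) = kz p.2 (S \ p.1) * kz (p.1 \ p.2) (S \ p.1) := by
      rw [← kz_union_left Finset.disjoint_sdiff, Finset.union_sdiff_of_subset h₂]
    rw [hpS, hST, kz_union_right _ (Finset.disjoint_sdiff.mono_left Finset.sdiff_subset), hsplit]
    ring

/-- The grade involution of `⋀(ℂ⁸)`, acting by `(-1)^k` in degree `k`. -/
def involute : Lam8 →ₗ[ℂ] Lam8 where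
  toFun f S := (-1) ^ S.card * f S
  map_add' f g := by ext S; exact mul_add _ _ _
  map_smul' c f := by ext S; exact mul_left_comm _ _ _

lemma involute_apply (f : Lam8) (S : Finset (Fin 8)) : involute f S = (-1) ^ S.card * f S := rfl

lemma involute_E8 (S : Finset (Fin 8)) : involute (E8 S) = (-1 : ℂ) ^ S.card • E8 S := by
  ext T
  by_cases hT : T = S <;> simp [involute_apply, E8, hT]

lemma wedge_comm_of_even {f : Lam8} (hf : involute f = f) (g : Lam8) :
    wedge f g = wedge g f := by
  ext S
  refine Finset.sum_nbij' (S \ ·) (S \ ·) (by simp) (by simp) (by simp) (by simp) fun A hA => ?_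
  rw [Finset.sdiff_sdiff_eq_self (Finset.mem_powerset.1 hA)]
  have hfA : (-1) ^ A.card * f A = f A := congrFun hf A
  rcases eq_or_ne (f A) 0 with h0 | h0
  · simp [h0]
  have hsign : (-1 : ℂ) ^ A.card = 1 := mul_right_cancel₀ h0 (hfA.trans (one_mul _).symm)
  have hswap : kz A (S \ A) * kz (S \ A) A = 1 := by
    rw [kz_mul_kz_swap Finset.disjoint_sdiff, pow_mul, hsign, one_pow]
  have hkz : kz A (S \ A) = kz (S \ A) A := by
    linear_combination kz (S \ A) A * hswap - kz A (S \ A) * kz_mul_self (S \ A) A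
  rw [hkz]
  ring

lemma involute_wedge (f g : Lam8) : involute (wedge f g) = wedge (involute f) (involute g) := by
  ext S
  simp only [involute_apply, wedge, Finset.mul_sum]
  refine Finset.sum_congr rfl fun A hA => ?_
  rw [← Finset.card_sdiff_add_card_eq_card (Finset.mem_powerset.1 hA), pow_add]
  ring

lemma dOp8_apply_of_mem {i : Fin 8} {S : Finset (Fin 8)} (h : i ∈ S) (f : Lam8) :
    dOp8 i f S = 0 := if_pos h

lemma dOp8_apply_of_notMem {i : Fin 8} {S : Finset (Fin 8)} (h : i ∉ S) (f : Lam8) :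
    dOp8 i f S = kz {i} S * f (insert i S) := by
  simp [dOp8, h, kz]

lemma dOp8_wedge_apply_of_notMem {i : Fin 8} {S : Finset (Fin 8)} (hi : i ∉ S) (f g : Lam8) :
    dOp8 i (wedge f g) S = wedge (dOp8 i f) g S + wedge (involute f) (dOp8 i g) S := by
  rw [dOp8_apply_of_notMem hi, wedge, wedge, wedge, Finset.sum_powerset_insert hi, mul_add,
    add_comm, Finset.mul_sum, Finset.mul_sum]
  congr 1 <;> refine Finset.sum_congr rfl fun A hA => ?_
  all_goals
    have hAS := Finset.mem_powerset.1 hA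
    have hiA : i ∉ A := fun h => hi (hAS h)
    have hiT : i ∉ S \ A := fun h => hi (Finset.sdiff_subset h)
    have hsplit : kz {i} S = kz {i} A * kz {i} (S \ A) := by
      rw [← kz_union_right _ Finset.disjoint_sdiff, Finset.union_sdiff_of_subset hAS]
  · have hdiff : insert i S \ insert i A = S \ A := by grind
    rw [hdiff, dOp8_apply_of_notMem hiA, kz_insert_left hiA, hsplit]
    linear_combination
      kz {i} A * kz A (S \ A) * f (insert i A) * g (S \ A) * kz_mul_self {i} (S \ A)
  · rw [Finset.insert_sdiff_of_notMem _ hiA, dOp8_apply_of_notMem hiT, kz_insert_right _ hiT,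
      hsplit, involute_apply, ← kz_singleton_mul_swap hiA]
    ring

lemma wedge_dOp8_add_apply_of_mem {i : Fin 8} {S : Finset (Fin 8)} (hi : i ∈ S) (f g : Lam8) :
    wedge (dOp8 i f) g S + wedge (involute f) (dOp8 i g) S = 0 := by
  obtain ⟨S, hiS, rfl⟩ : ∃ S', i ∉ S' ∧ insert i S' = S :=
    ⟨S.erase i, Finset.notMem_erase i S, Finset.insert_erase hi⟩
  simp only [wedge, Finset.sum_powerset_insert hiS, ← Finset.sum_add_distrib]
  refine Finset.sum_eq_zero fun A hA => ?_
  have hiA : i ∉ A := fun h => hiS (Finset.mem_powerset.1 hA h)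
  have hiT : i ∉ S \ A := fun h => hiS (Finset.sdiff_subset h)
  have hdiff : insert i S \ insert i A = S \ A := by grind
  rw [hdiff, Finset.insert_sdiff_of_notMem _ hiA, dOp8_apply_of_mem (Finset.mem_insert_self i A),
    dOp8_apply_of_mem (Finset.mem_insert_self i (S \ A)), dOp8_apply_of_notMem hiA,
    dOp8_apply_of_notMem hiT, kz_insert_left hiA, kz_insert_right _ hiT, involute_apply,
    involute_apply, Finset.card_insert_of_notMem hiA, pow_succ, ← kz_singleton_mul_swap hiA]
  linear_combination
    -(kz A {i} * kz {i} A * kz A (S \ A) * f (insert i A) * g (insert i (S \ A)))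
      * kz_mul_self {i} (S \ A)

lemma dOp8_wedge (i : Fin 8) (f g : Lam8) :
    dOp8 i (wedge f g) = wedge (dOp8 i f) g + wedge (involute f) (dOp8 i g) := by
  ext S
  by_cases hi : i ∈ S
  · rw [dOp8_apply_of_mem hi, Pi.add_apply, wedge_dOp8_add_apply_of_mem hi]
  · exact dOp8_wedge_apply_of_notMem hi f g

lemma wedge_E8_apply (B : Finset (Fin 8)) (g : Lam8) (S : Finset (Fin 8)) :
    wedge (E8 B) g S = if B ⊆ S then kz B (S \ B) * g (S \ B) else 0 := by
  simp only [wedge, E8, mul_ite, mul_one, mul_zero, ite_mul, zero_mul, Finset.sum_ite_eq',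
    Finset.mem_powerset]

lemma wedge_E8_E8 (A B : Finset (Fin 8)) :
    wedge (E8 A) (E8 B) = if Disjoint A B then kz A B • E8 (A ∪ B) else 0 := by
  ext S
  have hiff : A ⊆ S ∧ S \ A = B ↔ Disjoint A B ∧ S = A ∪ B := by
    rw [Finset.disjoint_left]; grind
  rw [wedge_E8_apply]
  by_cases hB : A ⊆ S ∧ S \ A = B
  · obtain ⟨hAB, rfl⟩ := hiff.1 hB
    simp [E8, hB.2, hAB]
  · have hS : ¬(Disjoint A B ∧ S = A ∪ B) := mt hiff.2 hB
    have hlhs : (if A ⊆ S then kz A (S \ A) * E8 B (S \ A) else 0) = 0 := by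
      simp only [E8]; grind
    rw [hlhs]
    split_ifs with hAB
    · simp [E8, not_and.1 hS hAB]
    · rfl

lemma E8_empty_wedge (f : Lam8) : wedge (E8 ∅) f = f := by
  ext S
  simp [wedge_E8_apply, kz]

lemma wedge_E8_empty (f : Lam8) : wedge f (E8 ∅) = f := by
  have heven : involute (E8 ∅) = E8 ∅ := by simp [involute_E8]
  rw [← wedge_comm_of_even heven, E8_empty_wedge]

lemma dOp8_E8 (i : Fin 8) (S : Finset (Fin 8)) :
    dOp8 i (E8 S) = if i ∈ S then kz {i} (S.erase i) • E8 (S.erase i) else 0 := by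
  ext T
  have hiff : i ∉ T ∧ insert i T = S ↔ i ∈ S ∧ T = S.erase i := by grind
  by_cases hT : i ∉ T ∧ insert i T = S
  · obtain ⟨hiS, rfl⟩ := hiff.1 hT
    simp [dOp8_apply_of_notMem, E8, hiS]
  · have hS : ¬(i ∈ S ∧ T = S.erase i) := mt hiff.2 hT
    rw [not_and] at hT hS
    by_cases hiT : i ∈ T <;> by_cases hiS : i ∈ S <;>
      simp_all [dOp8_apply_of_mem, dOp8_apply_of_notMem, E8]

lemma dOp8_E8_singleton (i p : Fin 8) : dOp8 i (E8 {p}) = if i = p then E8 ∅ else 0 := by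
  rcases eq_or_ne i p with rfl | hip
  · simp [dOp8_E8, kz]
  · simp [dOp8_E8, hip]

lemma E8_singleton_wedge_wedge_eq_zero {r p q : Fin 8} (h : r = p ∨ r = q) :
    wedge (E8 {r}) (wedge (E8 {p}) (E8 {q})) = 0 := by
  rw [wedge_E8_E8 {p}]
  split_ifs
  · simp [wedge_smul_right, wedge_E8_E8, h]
  · exact wedge_zero_right _

lemma dOp8_wedge_of_eq_wedge {i : Fin 8} {f g v w : Lam8} (hf : involute f = f)
    (hv : dOp8 i f = wedge v f) (hw : dOp8 i g = wedge w g) :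
    dOp8 i (wedge f g) = wedge (v + w) (wedge f g) := by
  calc dOp8 i (wedge f g)
      = wedge (wedge v f) g + wedge (wedge f w) g := by rw [dOp8_wedge, hf, hv, hw, wedge_assoc f]
    _ = wedge v (wedge f g) + wedge w (wedge f g) := by
        rw [wedge_comm_of_even hf w, wedge_assoc, wedge_assoc]
    _ = wedge (v + w) (wedge f g) := (wedge_add_left ..).symm

/-- The exponential of the quadratic element `c e_p ∧ e_q`, which squares to zero. -/
def pairExp (c : ℂ) (p q : Fin 8) : Lam8 := E8 ∅ + c • wedge (E8 {p}) (E8 {q})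

/-- The logarithmic derivative in the direction `i` of `pairExp c p q`, that is, the derivative of
its exponent. -/
def pairLogDeriv (c : ℂ) (p q i : Fin 8) : Lam8 :=
  c • ((if i = p then E8 {q} else 0) - if i = q then E8 {p} else 0)

lemma dOp8_pairExp_eq_pairLogDeriv (c : ℂ) (p q i : Fin 8) :
    dOp8 i (pairExp c p q) = pairLogDeriv c p q i := by
  rw [pairExp, pairLogDeriv, dOp8_add, dOp8_smul, dOp8_E8, if_neg (Finset.notMem_empty i), zero_add,
    dOp8_wedge, dOp8_E8_singleton, dOp8_E8_singleton, involute_E8, Finset.card_singleton, pow_one,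
    neg_one_smul, wedge_neg_left, ← sub_eq_add_neg]
  split_ifs <;> simp only [E8_empty_wedge, wedge_E8_empty, zero_wedge, wedge_zero_right]

lemma pairLogDeriv_wedge_pairExp (c : ℂ) (p q i : Fin 8) :
    wedge (pairLogDeriv c p q i) (pairExp c p q) = pairLogDeriv c p q i := by
  have hp : wedge (E8 {p}) (wedge (E8 {p}) (E8 {q})) = 0 :=
    E8_singleton_wedge_wedge_eq_zero (Or.inl rfl)
  have hq : wedge (E8 {q}) (wedge (E8 {p}) (E8 {q})) = 0 :=
    E8_singleton_wedge_wedge_eq_zero (Or.inr rfl)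
  rw [pairExp, wedge_add_right, wedge_E8_empty, wedge_smul_right, pairLogDeriv, wedge_smul_left,
    wedge_sub_left]
  split_ifs <;> simp [zero_wedge, hp, hq]

lemma dOp8_pairExp (c : ℂ) (p q i : Fin 8) :
    dOp8 i (pairExp c p q) = wedge (pairLogDeriv c p q i) (pairExp c p q) := by
  rw [dOp8_pairExp_eq_pairLogDeriv, pairLogDeriv_wedge_pairExp]

lemma involute_pairExp (c : ℂ) (p q : Fin 8) : involute (pairExp c p q) = pairExp c p q := by
  simp only [pairExp, map_add, map_smul, involute_wedge, involute_E8, Finset.card_empty,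
    Finset.card_singleton, pow_zero, pow_one, one_smul, wedge_smul_left, wedge_smul_right,
    smul_smul, neg_one_mul, neg_neg]

lemma E8_singleton_wedge_E8_singleton {p q : Fin 8} (h : p < q) :
    wedge (E8 {p}) (E8 {q}) = E8 {p, q} := by
  have hkz : kz {p} {q} = 1 := kz_eq_one_of_lt (by simpa using h)
  rw [wedge_E8_E8, if_pos (Finset.disjoint_singleton.2 h.ne), hkz, one_smul, Finset.insert_eq]

lemma pairExp_wedge_pairExp (c d : ℂ) {p q r s : Fin 8} (hpr : p < r) (hrs : r < s) (hsq : s < q) :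
    wedge (pairExp c p q) (pairExp d r s) =
      E8 ∅ + c • E8 {p, q} + d • E8 {r, s} + (c * d) • E8 {p, r, s, q} := by
  have hkz : kz {p, q} {r, s} = 1 := by
    simp [kz, Finset.filter_insert, Finset.filter_singleton, hpr.not_gt, hsq,
      (hpr.trans hrs).not_gt, hrs.trans hsq, (hpr.trans (hrs.trans hsq)).ne, hrs.ne]
  have hdisj : Disjoint ({p, q} : Finset (Fin 8)) {r, s} := by
    rw [Finset.disjoint_left]; grind
  have hunion : ({p, q} ∪ {r, s} : Finset (Fin 8)) = {p, r, s, q} := by grind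
  have hpair : wedge (E8 {p, q}) (E8 {r, s}) = E8 {p, r, s, q} := by
    rw [wedge_E8_E8, if_pos hdisj, hkz, hunion, one_smul]
  rw [pairExp, pairExp, E8_singleton_wedge_E8_singleton (hpr.trans (hrs.trans hsq)),
    E8_singleton_wedge_E8_singleton hrs]
  simp only [wedge_add_left, wedge_add_right, wedge_smul_left, wedge_smul_right, E8_empty_wedge,
    wedge_E8_empty, hpair]
  module

lemma Kplus_eq_wedge_pairExp :
    Kplus = wedge (pairExp (-Complex.I) 0 5) (pairExp Complex.I 1 4) := by
  rw [pairExp_wedge_pairExp _ _ (by decide) (by decide) (by decide), neg_mul, Complex.I_mul_I,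
    neg_neg, one_smul, neg_smul, ← sub_eq_add_neg, Kplus]

lemma Kminus_eq_wedge_pairExp :
    Kminus = wedge (pairExp (-Complex.I) 2 7) (pairExp Complex.I 3 6) := by
  rw [pairExp_wedge_pairExp _ _ (by decide) (by decide) (by decide), neg_mul, Complex.I_mul_I,
    neg_neg, one_smul, neg_smul, ← sub_eq_add_neg, Kminus]

lemma involute_Kplus : involute Kplus = Kplus := by
  rw [Kplus_eq_wedge_pairExp, involute_wedge, involute_pairExp, involute_pairExp]

lemma involute_Kminus : involute Kminus = Kminus := by
  rw [Kminus_eq_wedge_pairExp, involute_wedge, involute_pairExp, involute_pairExp]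

lemma involute_Kker : involute Kker = Kker := by
  rw [Kker, involute_wedge, involute_Kplus, involute_Kminus]

/-- The logarithmic derivative of the Fourier kernel in the direction `i`: the derivative of its
exponent `−i(ε₊(τ,θ) + ε₋(τ̄,θ̄))`. -/
def kerLogDeriv (i : Fin 8) : Lam8 :=
  (pairLogDeriv (-Complex.I) 0 5 i + pairLogDeriv Complex.I 1 4 i) +
    (pairLogDeriv (-Complex.I) 2 7 i + pairLogDeriv Complex.I 3 6 i)

lemma dOp8_Kker (i : Fin 8) : dOp8 i Kker = wedge (kerLogDeriv i) Kker := by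
  refine dOp8_wedge_of_eq_wedge involute_Kplus ?_ ?_
  · rw [Kplus_eq_wedge_pairExp]
    exact dOp8_wedge_of_eq_wedge (involute_pairExp ..) (dOp8_pairExp ..) (dOp8_pairExp ..)
  · rw [Kminus_eq_wedge_pairExp]
    exact dOp8_wedge_of_eq_wedge (involute_pairExp ..) (dOp8_pairExp ..) (dOp8_pairExp ..)

lemma kerLogDeriv_thI (a : Fin 2) :
    kerLogDeriv (thI a) = -∑ b, (Complex.I * eps a b) • E8 {tI b} := by
  fin_cases a <;> simp [kerLogDeriv, pairLogDeriv, thI, tI, eps]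

lemma kerLogDeriv_thbI (a : Fin 2) :
    kerLogDeriv (thbI a) = -∑ b, (Complex.I * eps a b) • E8 {tbI b} := by
  fin_cases a <;> simp [kerLogDeriv, pairLogDeriv, thbI, tbI, eps]

lemma sum_eps_smul_kerLogDeriv_tI (a : Fin 2) :
    ∑ b, (-Complex.I * eps a b) • kerLogDeriv (tI b) = E8 {thI a} := by
  fin_cases a <;> simp [kerLogDeriv, pairLogDeriv, thI, tI, eps, smul_smul]

lemma sum_eps_smul_kerLogDeriv_tbI (a : Fin 2) :
    ∑ b, (-Complex.I * eps a b) • kerLogDeriv (tbI b) = E8 {thbI a} := by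
  fin_cases a <;> simp [kerLogDeriv, pairLogDeriv, thbI, tbI, eps, smul_smul]

/-- The indices of `τ¹, τ², τ̄¹, τ̄²`. -/
abbrev tauSet : Finset (Fin 8) := {0, 1, 2, 3}

/-- The indices of `θ¹, θ², θ̄¹, θ̄²`. -/
abbrev thetaSet : Finset (Fin 8) := {4, 5, 6, 7}

lemma disjoint_tauSet_thetaSet : Disjoint tauSet thetaSet := by decide

lemma kz_union_thetaSet {A S : Finset (Fin 8)} (hA : A ⊆ tauSet) (hS : S ⊆ tauSet) :
    kz A (S ∪ thetaSet) = kz A S := by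
  have hlt : ∀ a ∈ tauSet, ∀ b ∈ thetaSet, a < b := by decide
  rw [kz_union_right A (disjoint_tauSet_thetaSet.mono_left hS),
    kz_eq_one_of_lt fun a ha => hlt a (hA ha), mul_one]

lemma Ber_dOp8_of_mem_thetaSet {i : Fin 8} (hi : i ∈ thetaSet) (f : Lam8) :
    Ber (dOp8 i f) = 0 := by
  ext S
  simp only [Ber, dOp8_apply_of_mem (Finset.mem_union_right S hi), ite_self, Pi.zero_apply]

lemma Ber_dOp8_of_mem_tauSet {j : Fin 8} (hj : j ∈ tauSet) (f : Lam8) :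
    Ber (dOp8 j f) = dOp8 j (Ber f) := by
  ext S
  have hjθ : j ∉ thetaSet := Finset.disjoint_left.1 disjoint_tauSet_thetaSet hj
  by_cases hjS : j ∈ S
  · simp only [Ber, dOp8_apply_of_mem hjS, dOp8_apply_of_mem (Finset.mem_union_left _ hjS),
      ite_self]
  · have hjU : j ∉ S ∪ thetaSet := Finset.notMem_union.2 ⟨hjS, hjθ⟩
    rw [dOp8_apply_of_notMem hjS]
    by_cases hS : S ⊆ tauSet
    · rw [Ber, Ber, if_pos hS, if_pos (Finset.insert_subset hj hS), dOp8_apply_of_notMem hjU,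
        kz_union_thetaSet (Finset.singleton_subset_iff.2 hj) hS, Finset.insert_union]
    · rw [Ber, Ber, if_neg hS, if_neg fun h => hS ((Finset.subset_insert j S).trans h), mul_zero]

lemma Ber_wedge_E8 {A : Finset (Fin 8)} (hA : A ⊆ tauSet) (f : Lam8) :
    Ber (wedge (E8 A) f) = wedge (E8 A) (Ber f) := by
  ext S
  rw [wedge_E8_apply]
  by_cases hS : S ⊆ tauSet
  · have hAθ := disjoint_tauSet_thetaSet.mono_left hA
    have hsub : A ⊆ S ∪ thetaSet ↔ A ⊆ S :=
      ⟨fun h => hAθ.left_le_of_le_sup_right h, fun h => h.trans Finset.subset_union_left⟩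
    have hdiff : (S ∪ thetaSet) \ A = S \ A ∪ thetaSet := by
      rw [Finset.union_sdiff_distrib, Finset.sdiff_eq_self_of_disjoint hAθ.symm]
    have hSA : S \ A ⊆ tauSet := Finset.sdiff_subset.trans hS
    rw [Ber, Ber, if_pos hS, if_pos hSA, wedge_E8_apply, hdiff, kz_union_thetaSet hA hSA]
    simp only [hsub]
  · rw [Ber, Ber, if_neg hS]
    split_ifs with hAS hSA
    · exact absurd (Finset.sdiff_union_of_subset hAS ▸ Finset.union_subset hSA hA) hS
    · rw [mul_zero]
    · rfl

lemma Fodd_sum_smul_wedge {ι : Type*} [Fintype ι] (c : ι → ℂ) (v : ι → Lam8) (x : Lam8) :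
    Fodd (wedge (∑ b, c b • v b) x) = ∑ b, c b • Fodd (wedge (v b) x) := by
  simp only [Fodd, sum_smul_wedge, wedge_sum_smul, Ber_sum_smul]

lemma Fodd_dOp8 {ι : Type*} [Fintype ι] {c : ι → ℂ} {j : ι → Fin 8} {i : Fin 8}
    (hi : i ∈ thetaSet) (hj : ∀ b, j b ∈ tauSet)
    (hlog : kerLogDeriv i = -∑ b, c b • E8 {j b}) (x : Lam8) :
    Fodd (dOp8 i x) = ∑ b, c b • wedge (E8 {j b}) (Fodd x) := by
  have hparts : wedge Kker (dOp8 i x) =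
      dOp8 i (wedge Kker x) + wedge (∑ b, c b • E8 {j b}) (wedge Kker x) := by
    rw [dOp8_wedge, involute_Kker, dOp8_Kker, hlog, wedge_assoc, wedge_neg_left]
    abel
  calc Fodd (dOp8 i x)
      = Ber (wedge (∑ b, c b • E8 {j b}) (wedge Kker x)) := by
        rw [Fodd, hparts, Ber_add, Ber_dOp8_of_mem_thetaSet hi, zero_add]
    _ = ∑ b, c b • wedge (E8 {j b}) (Fodd x) := by
        simp only [sum_smul_wedge, Ber_sum_smul,
          Ber_wedge_E8 (Finset.singleton_subset_iff.2 (hj _)), Fodd]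

lemma dOp8_Fodd {j : Fin 8} (hj : j ∈ tauSet) {x : Lam8} (hx : dOp8 j x = 0) :
    dOp8 j (Fodd x) = Fodd (wedge (kerLogDeriv j) x) := by
  rw [Fodd, Fodd, ← Ber_dOp8_of_mem_tauSet hj, dOp8_wedge, hx, wedge_zero_right, add_zero,
    dOp8_Kker, ← wedge_comm_of_even involute_Kker, wedge_assoc]

lemma inLamTheta.dOp8_eq_zero {x : Lam8} (hx : inLamTheta x) {j : Fin 8} (hj : j ∈ tauSet) :
    dOp8 j x = 0 := by
  ext S
  have hins : x (insert j S) = 0 := by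
    by_contra h
    exact Finset.disjoint_left.1 disjoint_tauSet_thetaSet hj (hx _ h (Finset.mem_insert_self j S))
  simp only [dOp8, hins, mul_zero, ite_self, Pi.zero_apply]

lemma thI_mem_thetaSet (a : Fin 2) : thI a ∈ thetaSet := by decide +revert

lemma thbI_mem_thetaSet (a : Fin 2) : thbI a ∈ thetaSet := by decide +revert

lemma tI_mem_tauSet (a : Fin 2) : tI a ∈ tauSet := by decide +revert

lemma tbI_mem_tauSet (a : Fin 2) : tbI a ∈ tauSet := by decide +revert

/-- the odd Fourier transform `F_odd : ⋀Θ → ⋀T` exchanges odd derivatives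
with exterior multiplication and exterior multiplication with odd derivatives: for
`a ∈ {1,2}` and `x ∈ ⋀Θ`, (i) `F_odd(∂_{θ^a} x) = i Σ_b ε_{ab} τ^b ∧ F_odd(x)`;
(ii) `F_odd(∂_{θ̄^a} x) = i Σ_b ε_{ab} τ̄^b ∧ F_odd(x)`;
(iii) `F_odd(θ^a ∧ x) = −i Σ_b ε^{ab} ∂_{τ^b}(F_odd x)`;
(iv) `F_odd(θ̄^a ∧ x) = −i Σ_b ε^{ab} ∂_{τ̄^b}(F_odd x)`. -/
theorem stmt14 (a : Fin 2) (x : Lam8) (hx : inLamTheta x) :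
    Fodd (dOp8 (thI a) x) =
      ∑ b : Fin 2, (Complex.I * eps a b) • wedge (E8 {tI b}) (Fodd x) ∧
    Fodd (dOp8 (thbI a) x) =
      ∑ b : Fin 2, (Complex.I * eps a b) • wedge (E8 {tbI b}) (Fodd x) ∧
    Fodd (wedge (E8 {thI a}) x) =
      ∑ b : Fin 2, (-Complex.I * eps a b) • dOp8 (tI b) (Fodd x) ∧
    Fodd (wedge (E8 {thbI a}) x) =
      ∑ b : Fin 2, (-Complex.I * eps a b) • dOp8 (tbI b) (Fodd x) := by
  refine ⟨Fodd_dOp8 (thI_mem_thetaSet a) tI_mem_tauSet (kerLogDeriv_thI a) x,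
    Fodd_dOp8 (thbI_mem_thetaSet a) tbI_mem_tauSet (kerLogDeriv_thbI a) x, ?_, ?_⟩
  · rw [← sum_eps_smul_kerLogDeriv_tI, Fodd_sum_smul_wedge]
    simp only [dOp8_Fodd (tI_mem_tauSet _) (hx.dOp8_eq_zero (tI_mem_tauSet _))]
  · rw [← sum_eps_smul_kerLogDeriv_tbI, Fodd_sum_smul_wedge]
    simp only [dOp8_Fodd (tbI_mem_tauSet _) (hx.dOp8_eq_zero (tbI_mem_tauSet _))]

end
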